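/- (Aronszajn–Krein-type formula, first identity.) For every f ∈ L²(μ), all α, β ∈ ℝ, and every z ∈ ℂ∖ℝ, one has (1 + (α − β)·𝒦_{μ_β}(z))·𝒦_{f_α μ_α}(z) = 𝒦_{f_β μ_β}(z), where f_α = V_α f and f_β = V_β f. -/

import Mathlib

/-!
If a unitary `V` carries an operator `T` to multiplication by `t` on `L²(ν)` and a vector `e` to
the constant function one, then a solution `g` of `T g - z g = f` satisfies
`⟪e, g⟫ = ∫ (V f)(t) (t - z)⁻¹ dν(t)`: Cauchy transforms are matrix elements of resolvents.
Let `A = B + c ⟪e, ·⟫ e` and solve `A g - z g = f`. Then `B g - z g = f - c ⟪e, g⟫ e`, so evaluating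
`⟪e, g⟫` in the spectral representations of `A` and of `B` expresses one number by the Cauchy
transform of `f` for `A` and by those of `f` and `e` for `B`.
-/

open MeasureTheory Complex Set

local notation "⟪" x ", " y "⟫" => @inner ℂ _ _ x y

section CauchyTransform

variable {ν : Measure ℝ} {z : ℂ}

/-- The Cauchy transform `𝒦_{fν}(z) = ∫ f(t) (t - z)⁻¹ dν(t)`; the transform `𝒦_ν` of the measure
itself is the case where `f` is the constant function one. -/
noncomputable def cauchyTransform (ν : Measure ℝ) (f : ℝ → ℂ) (z : ℂ) : ℂ :=
  ∫ t, f t * ((t : ℂ) - z)⁻¹ ∂ν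

lemma notMem_image_ofReal_of_im_ne_zero (hz : z.im ≠ 0) (s : Set ℝ) : z ∉ ((↑) : ℝ → ℂ) '' s := by
  rintro ⟨t, -, rfl⟩
  exact hz (ofReal_im t)

lemma ae_ofReal_sub_ne_zero (hz : z ∉ (↑) '' ν.support) : ∀ᵐ t : ℝ ∂ν, (t : ℂ) - z ≠ 0 := by
  filter_upwards [Measure.support_mem_ae] with t ht h
  exact hz ⟨t, ht, sub_eq_zero.mp h⟩

lemma memLp_mul_inv_ofReal_sub {p : ENNReal} {f : ℝ → ℂ} (hf : MemLp f p ν)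
    (hz : z ∉ (↑) '' ν.support) : MemLp (fun t : ℝ => f t * ((t : ℂ) - z)⁻¹) p ν := by
  have hmeas : Measurable fun t : ℝ => ((t : ℂ) - z)⁻¹ := by fun_prop
  refine hf.of_le_mul (c := (Metric.infDist z ((↑) '' ν.support))⁻¹)
    (hf.aestronglyMeasurable.mul hmeas.aestronglyMeasurable) ?_
  filter_upwards [Measure.support_mem_ae] with t ht
  have hbound : ‖((t : ℂ) - z)⁻¹‖ ≤ (Metric.infDist z ((↑) '' ν.support))⁻¹ := by
    simpa [resolvent] using norm_resolvent_le_inv_infDist_support (A := ℂ) hz ht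
  rw [norm_mul, mul_comm]
  gcongr

end CauchyTransform

section SpectralRepresentation

variable {H : Type*} [NormedAddCommGroup H] [InnerProductSpace ℂ H]

/-- The unitary `V` is a spectral representation of `T` on `L²(ν)` with cyclic vector `e`: it
carries `T` to multiplication by the independent variable and `e` to the constant function one.
The measure `ν` is then the spectral measure of `T` with respect to `e`. -/
structure IsSpectralRepresentation (T : H →L[ℂ] H) (e : H) (ν : Measure ℝ)
    (V : H ≃ₗᵢ[ℂ] Lp ℂ 2 ν) : Prop where
  map_apply (g : H) : V (T g) =ᵐ[ν] fun t => t * V g t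
  map_cyclic : V e =ᵐ[ν] fun _ => 1

namespace IsSpectralRepresentation

variable {T : H →L[ℂ] H} {e f g : H} {ν : Measure ℝ} {V : H ≃ₗᵢ[ℂ] Lp ℂ 2 ν} {z : ℂ}

lemma map_sub_smul (h : IsSpectralRepresentation T e ν V) (z : ℂ) (g : H) :
    V (T g - z • g) =ᵐ[ν] fun t => ((t : ℂ) - z) * V g t := by
  rw [map_sub, map_smul]
  filter_upwards [h.map_apply g, Lp.coeFn_sub (V (T g)) (z • V g), Lp.coeFn_smul z (V g)]
    with t hT hsub hsmul
  rw [hsub, Pi.sub_apply, hsmul, Pi.smul_apply, hT, smul_eq_mul, sub_mul]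

lemma exists_sub_smul_eq (h : IsSpectralRepresentation T e ν V) (hz : z ∉ (↑) '' ν.support)
    (f : H) : ∃ g, T g - z • g = f := by
  have hmem := memLp_mul_inv_ofReal_sub (Lp.memLp (V f)) hz
  refine ⟨V.symm hmem.toLp, V.injective (Lp.ext ?_)⟩
  filter_upwards [h.map_sub_smul z (V.symm hmem.toLp), hmem.coeFn_toLp, ae_ofReal_sub_ne_zero hz]
    with t hmap htoLp ht
  rw [hmap, V.apply_symm_apply, htoLp, mul_comm, inv_mul_cancel_right₀ ht]

lemma map_eq_mul_inv (h : IsSpectralRepresentation T e ν V) (hz : z ∉ (↑) '' ν.support)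
    (hg : T g - z • g = f) : V g =ᵐ[ν] fun t => V f t * ((t : ℂ) - z)⁻¹ := by
  filter_upwards [hg ▸ h.map_sub_smul z g, ae_ofReal_sub_ne_zero hz] with t hf ht
  rw [hf, mul_comm, inv_mul_cancel_left₀ ht]

lemma inner_cyclic_ae_eq (h : IsSpectralRepresentation T e ν V) (g : H) :
    (fun t => ⟪V e t, V g t⟫) =ᵐ[ν] V g := by
  filter_upwards [h.map_cyclic] with t ht
  simp [ht]

lemma integrable_map (h : IsSpectralRepresentation T e ν V) (g : H) : Integrable (V g) ν :=
  (L2.integrable_inner (V e) (V g)).congr (h.inner_cyclic_ae_eq g)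

lemma inner_cyclic_eq_integral (h : IsSpectralRepresentation T e ν V) (g : H) :
    ⟪e, g⟫ = ∫ t, V g t ∂ν := by
  rw [← V.inner_map_map, L2.inner_def]
  exact integral_congr_ae (h.inner_cyclic_ae_eq g)

lemma inner_cyclic_eq_cauchyTransform (h : IsSpectralRepresentation T e ν V)
    (hz : z ∉ (↑) '' ν.support) (hg : T g - z • g = f) :
    ⟪e, g⟫ = cauchyTransform ν (V f) z := by
  rw [h.inner_cyclic_eq_integral]
  exact integral_congr_ae (h.map_eq_mul_inv hz hg)

lemma integrable_mul_inv (h : IsSpectralRepresentation T e ν V) (hz : z ∉ (↑) '' ν.support)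
    (f : H) : Integrable (fun t => V f t * ((t : ℂ) - z)⁻¹) ν := by
  obtain ⟨g, hg⟩ := h.exists_sub_smul_eq hz f
  exact (h.integrable_map g).congr (h.map_eq_mul_inv hz hg)

lemma cauchyTransform_cyclic (h : IsSpectralRepresentation T e ν V) (z : ℂ) :
    cauchyTransform ν (V e) z = cauchyTransform ν (fun _ => 1) z := by
  refine integral_congr_ae ?_
  filter_upwards [h.map_cyclic] with t ht
  rw [ht]

lemma cauchyTransform_sub_smul_cyclic (h : IsSpectralRepresentation T e ν V)
    (hz : z ∉ (↑) '' ν.support) (f : H) (a : ℂ) :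
    cauchyTransform ν (V (f - a • e)) z =
      cauchyTransform ν (V f) z - a * cauchyTransform ν (fun _ => 1) z := by
  rw [← h.cauchyTransform_cyclic, cauchyTransform, cauchyTransform, cauchyTransform,
    ← integral_const_mul, ← integral_sub (h.integrable_mul_inv hz f)
      ((h.integrable_mul_inv hz e).const_mul a), map_sub, map_smul]
  refine integral_congr_ae ?_
  filter_upwards [Lp.coeFn_sub (V f) (a • V e), Lp.coeFn_smul a (V e)] with t hsub hsmul
  rw [hsub, Pi.sub_apply, hsmul, Pi.smul_apply, smul_eq_mul, sub_mul, mul_assoc]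

end IsSpectralRepresentation

theorem aronszajn_krein_first_identity_general {A B : H →L[ℂ] H} {e : H} {c : ℂ}
    (hAB : A = B + c • InnerProductSpace.rankOne ℂ e e)
    {μ ν : Measure ℝ} {V : H ≃ₗᵢ[ℂ] Lp ℂ 2 μ} {W : H ≃ₗᵢ[ℂ] Lp ℂ 2 ν}
    (hV : IsSpectralRepresentation A e μ V) (hW : IsSpectralRepresentation B e ν W)
    {z : ℂ} (hzμ : z ∉ (↑) '' μ.support) (hzν : z ∉ (↑) '' ν.support) (f : H) :
    (1 + c * cauchyTransform ν (fun _ => 1) z) * cauchyTransform μ (V f) z =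
      cauchyTransform ν (W f) z := by
  obtain ⟨g, hg⟩ := hV.exists_sub_smul_eq hzμ f
  have hBg : B g - z • g = f - (c * ⟪e, g⟫) • e := by
    rw [← hg, hAB]
    simp only [add_apply, smul_apply, InnerProductSpace.rankOne_apply, mul_smul]
    abel
  have hμ : ⟪e, g⟫ = cauchyTransform μ (V f) z := hV.inner_cyclic_eq_cauchyTransform hzμ hg
  have hν : ⟪e, g⟫ = cauchyTransform ν (W f) z -
      c * ⟪e, g⟫ * cauchyTransform ν (fun _ => 1) z :=
    (hW.inner_cyclic_eq_cauchyTransform hzν hBg).trans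
      (hW.cauchyTransform_sub_smul_cyclic hzν f _)
  rw [← hμ]
  linear_combination hν

end SpectralRepresentation

lemma eq_add_smul_rankOne_of_ae_eq_mul_add {X 𝕜 : Type*} [MeasurableSpace X] [RCLike 𝕜]
    {μ : Measure X} {one : Lp 𝕜 2 μ} (hone : one =ᵐ[μ] fun _ => 1) {m : X → 𝕜} {a b : 𝕜}
    {A B : Lp 𝕜 2 μ →L[𝕜] Lp 𝕜 2 μ}
    (hA : ∀ g : Lp 𝕜 2 μ, A g =ᵐ[μ] fun t => m t * g t + a * inner 𝕜 one g)
    (hB : ∀ g : Lp 𝕜 2 μ, B g =ᵐ[μ] fun t => m t * g t + b * inner 𝕜 one g) :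
    A = B + (a - b) • InnerProductSpace.rankOne 𝕜 one one := by
  ext1 g
  simp only [add_apply, smul_apply, InnerProductSpace.rankOne_apply, smul_smul]
  refine Lp.ext ?_
  filter_upwards [hA g, hB g, hone, Lp.coeFn_add (B g) (((a - b) * inner 𝕜 one g) • one),
    Lp.coeFn_smul ((a - b) * inner 𝕜 one g) one] with t hAt hBt h1 hadd hsmul
  rw [hadd, Pi.add_apply, hsmul, Pi.smul_apply, hAt, hBt, h1, smul_eq_mul]
  ring

/-- **Aronszajn–Krein-type formula, first identity.**
For every `f ∈ L²(μ)`, all `α, β ∈ ℝ` and nonreal `z`,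
`(1 + (α − β)·𝒦_{μ_β}(z))·𝒦_{f_α μ_α}(z) = 𝒦_{f_β μ_β}(z)`,
where `𝒦_{gτ}(z) = ∫ g(t)(t − z)⁻¹ dτ(t)` and `𝒦_τ(z) = ∫ (t − z)⁻¹ dτ(t)`. -/
theorem aronszajn_krein_first_identity
{μ : Measure ℝ} [IsFiniteMeasure μ]
    (hsupp : ∃ K : Set ℝ, IsCompact K ∧ μ Kᶜ = 0)
    (one : Lp ℂ 2 μ) (hone : (one : ℝ → ℂ) =ᵐ[μ] fun _ => 1)
    (A : ℝ → (Lp ℂ 2 μ →L[ℂ] Lp ℂ 2 μ))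
    (hA : ∀ (α : ℝ) (g : Lp ℂ 2 μ),
      (A α g : ℝ → ℂ) =ᵐ[μ] fun t => t * g t + (α : ℂ) * ⟪one, g⟫)
    (μm : ℝ → Measure ℝ)
    (hμm_fin : ∀ α, IsFiniteMeasure (μm α))
    (hμm0 : μm 0 = μ)
    (hres : ∀ (α : ℝ) (z : ℂ), z.im ≠ 0 → ∀ g : Lp ℂ 2 μ,
      A α g - z • g = one → ⟪one, g⟫ = ∫ t, ((t : ℂ) - z)⁻¹ ∂(μm α))
    (V : ∀ α : ℝ, Lp ℂ 2 μ ≃ₗᵢ[ℂ] Lp ℂ 2 (μm α))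
    (hV : ∀ (α : ℝ) (g : Lp ℂ 2 μ),
      (V α (A α g) : ℝ → ℂ) =ᵐ[μm α] fun t => t * (V α g) t)
    (hV1 : ∀ α : ℝ, (V α one : ℝ → ℂ) =ᵐ[μm α] fun _ => 1)
    (f : Lp ℂ 2 μ) (α β : ℝ) (z : ℂ) (hz : z.im ≠ 0) :
    (1 + ((α : ℂ) - (β : ℂ)) * ∫ t, ((t : ℂ) - z)⁻¹ ∂(μm β)) *
        (∫ t, (V α f : ℝ → ℂ) t * ((t : ℂ) - z)⁻¹ ∂(μm α))
      = ∫ t, (V β f : ℝ → ℂ) t * ((t : ℂ) - z)⁻¹ ∂(μm β) := by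
  have hAB := eq_add_smul_rankOne_of_ae_eq_mul_add hone (hA α) (hA β)
  have hz' := notMem_image_ofReal_of_im_ne_zero hz
  simpa only [cauchyTransform, one_mul] using aronszajn_krein_first_identity_general hAB
    ⟨hV α, hV1 α⟩ ⟨hV β, hV1 β⟩ (hz' (μm α).support) (hz' (μm β).support) f
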